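/- For any finite simple graph G of order n with minimum degree δ > 0 and any integer k ≥ 1, with r = ⌊k/(δ+1)⌋ + 1, θ = (δ+1)r − k and B_{k−1} = C((δ+1)r, k−1), the {k}-domination number satisfies γ_{{k}}(G) ≤ ((ln(θ+1) + ln B_{k−1} − ln r + 1)/(θ+1)) · r·n. -/

import Mathlib

open Finset Real

/-- The {k}-domination number: the smallest weight of a function f : V → {0,1,...,k}
whose sum over every closed neighbourhood is at least k. -/
noncomputable def braceKDomNum {V : Type*} [Fintype V] [DecidableEq V]
    (G : SimpleGraph V) [DecidableRel G.Adj] (k : ℕ) : ℕ :=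
  sInf {w : ℕ | ∃ f : V → ℕ, (∀ v, f v ≤ k) ∧
    (∀ v, k ≤ ∑ u ∈ insert v (G.neighborFinset v), f u) ∧ w = ∑ v, f v}

/-!
Take `r` copies of every vertex and let `S` be a random set of copies, each chosen independently
with probability `p`. Let `f v` be the number of chosen copies of `v`. Inside each closed
neighbourhood fix `δ + 1` vertices, hence `N = (δ + 1) r` copies. If only `k - j` of them are
chosen, with `j > 0`, then the `θ + j` others contain at least `j` subsets of size `t = θ + 1`, so
the total deficit of `f` is at most the number of such `t`-subsets missed by `S`. Adding to `f v`
the deficit at `v` gives a function of expected weight at most `n (r p + C(N, t) (1 - p) ^ t)`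
with all neighbourhood sums at least `k`; values above `k` can be lowered to `k` without spoiling
this. Here `C(N, t) = B_{k-1}`, since `N - t = k - 1`. The bound follows from
`1 - p ≤ exp (-p)` and the choice `p = ln (t B_{k-1} / r) / t`; when this exceeds `1`, the constant
function `r` is already good enough.
-/

section Combinatorics

lemma le_sum_min_of_le_sum {α M : Type*} [AddCommMonoid M] [LinearOrder M]
    [CanonicallyOrderedAdd M] {s : Finset α} {f : α → M} {k : M} (h : k ≤ ∑ i ∈ s, f i) :
    k ≤ ∑ i ∈ s, min (f i) k := by
  by_cases! hlarge : ∃ i ∈ s, k ≤ f i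
  · obtain ⟨i, hi, hki⟩ := hlarge
    calc k = min (f i) k := (min_eq_right hki).symm
      _ ≤ ∑ i ∈ s, min (f i) k := single_le_sum_of_canonicallyOrdered (f := fun i ↦ min (f i) k) hi
  · rwa [sum_congr rfl fun i hi ↦ min_eq_left (hlarge i hi).le]

lemma succ_le_choose_add {t : ℕ} (ht : t ≠ 0) (m : ℕ) : m + 1 ≤ m.choose t + t := by
  obtain ⟨t, rfl⟩ := Nat.exists_eq_succ_of_ne_zero ht
  induction m with
  | zero => simp
  | succ m ih =>
    rw [Nat.choose_succ_succ]
    rcases le_or_gt t m with htm | hmt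
    · have := Nat.choose_pos htm
      omega
    · omega

lemma le_mul_choose {N t : ℕ} (ht : t ≠ 0) (htN : t ≤ N) : N ≤ t * N.choose t := by
  obtain ⟨t, rfl⟩ := Nat.exists_eq_succ_of_ne_zero ht
  obtain ⟨N, rfl⟩ := Nat.exists_eq_add_of_le' (Nat.one_le_of_lt htN)
  rw [mul_comm, ← Nat.add_one_mul_choose_eq]
  exact Nat.le_mul_of_pos_right _ (Nat.choose_pos (by omega))

lemma filter_disjoint_powersetCard {ι : Type*} [DecidableEq ι] (A S : Finset ι) (t : ℕ) :
    {T ∈ A.powersetCard t | Disjoint T S} = (A \ S).powersetCard t := by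
  ext T
  simp only [mem_filter, mem_powersetCard, subset_sdiff]
  tauto

lemma sub_card_inter_le_card_filter_disjoint {ι : Type*} [DecidableEq ι] {A : Finset ι} {k t : ℕ}
    (ht : t ≠ 0) (hA : k + t ≤ #A + 1) (S : Finset ι) :
    k - #(A ∩ S) ≤ #{T ∈ A.powersetCard t | Disjoint T S} := by
  rw [filter_disjoint_powersetCard, card_powersetCard]
  have hsplit := card_inter_add_card_sdiff A S
  have hchoose := succ_le_choose_add ht #(A \ S)
  omega

lemma sum_mul_card_filter {α κ R : Type*} [NonAssocSemiring R] (s : Finset α) (J : Finset κ)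
    (w : α → R) (P : κ → α → Prop) [∀ j a, Decidable (P j a)] :
    ∑ a ∈ s, w a * #{j ∈ J | P j a} = ∑ j ∈ J, ∑ a ∈ s with P j a, w a := by
  simp_rw [sum_filter]
  rw [sum_comm]
  refine sum_congr rfl fun a _ ↦ ?_
  rw [← sum_filter, sum_const, nsmul_eq_mul, Nat.cast_comm]

end Combinatorics

section RandomSubset

variable {ι R : Type*} [Fintype ι] [DecidableEq ι]

/-- The probability that a random subset of `ι`, containing each element independently with
probability `p`, equals `S`. Finite sums against this weight serve as expectations. -/
def bernoulliWeight [CommRing R] (p : R) (S : Finset ι) : R :=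
  p ^ #S * (1 - p) ^ #Sᶜ

section CommRing

variable [CommRing R] (p : R)

lemma sum_bernoulliWeight_disjoint (T : Finset ι) :
    ∑ S with Disjoint T S, bernoulliWeight p S = (1 - p) ^ #T := by
  have hpowerset : ({S | Disjoint T S} : Finset (Finset ι)) = Tᶜ.powerset := by
    ext S
    simp [subset_compl_iff_disjoint_left]
  have hweight : ∀ S ∈ Tᶜ.powerset,
      bernoulliWeight p S = (1 - p) ^ #T * (p ^ #S * (1 - p) ^ (#Tᶜ - #S)) := by
    intro S hS
    have hST : #S ≤ #Tᶜ := card_le_card (mem_powerset.mp hS)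
    have hcompl : #Sᶜ = #T + (#Tᶜ - #S) := by
      have := card_add_card_compl S
      have := card_add_card_compl T
      omega
    rw [bernoulliWeight, hcompl, pow_add]
    ring
  rw [hpowerset, sum_congr rfl hweight, ← mul_sum, sum_pow_mul_eq_add_pow]
  simp

lemma sum_bernoulliWeight : ∑ S : Finset ι, bernoulliWeight p S = 1 := by
  simpa using sum_bernoulliWeight_disjoint p (∅ : Finset ι)

lemma sum_bernoulliWeight_mem (i : ι) : ∑ S with i ∈ S, bernoulliWeight p S = p := by
  have hsplit := sum_filter_add_sum_filter_not univ (i ∈ ·) (bernoulliWeight p)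
  have hnotMem := sum_bernoulliWeight_disjoint p {i}
  simp only [disjoint_singleton_left, card_singleton, pow_one] at hnotMem
  rw [hnotMem, sum_bernoulliWeight] at hsplit
  linear_combination hsplit

lemma sum_bernoulliWeight_mul_card :
    ∑ S : Finset ι, bernoulliWeight p S * #S = Fintype.card ι * p := by
  simpa [sum_bernoulliWeight_mem] using
    sum_mul_card_filter univ univ (bernoulliWeight p) (fun (i : ι) S ↦ i ∈ S)

end CommRing

variable [Field R] [LinearOrder R] [IsStrictOrderedRing R] {p : R}

lemma bernoulliWeight_nonneg (hp₀ : 0 ≤ p) (hp₁ : p ≤ 1) (S : Finset ι) :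
    0 ≤ bernoulliWeight p S :=
  mul_nonneg (pow_nonneg hp₀ _) (pow_nonneg (sub_nonneg.mpr hp₁) _)

lemma exists_le_sum_bernoulliWeight_mul (hp₀ : 0 ≤ p) (hp₁ : p ≤ 1) (X : Finset ι → R) :
    ∃ S, X S ≤ ∑ S, bernoulliWeight p S * X S := by
  by_contra! hX
  exact lt_irrefl _ <| (convex_Ioi _).sum_mem (fun S _ ↦ bernoulliWeight_nonneg hp₀ hp₁ S)
    (sum_bernoulliWeight p) fun S _ ↦ hX S

lemma exists_card_add_card_disjoint_le {κ : Type*} (hp₀ : 0 ≤ p) (hp₁ : p ≤ 1)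
    (J : Finset κ) (T : κ → Finset ι) :
    ∃ S : Finset ι, (#S + #{j ∈ J | Disjoint (T j) S} : R) ≤
      Fintype.card ι * p + ∑ j ∈ J, (1 - p) ^ #(T j) := by
  obtain ⟨S, hS⟩ := exists_le_sum_bernoulliWeight_mul hp₀ hp₁
    fun S : Finset ι ↦ (#S + #{j ∈ J | Disjoint (T j) S} : R)
  refine ⟨S, hS.trans_eq ?_⟩
  simp_rw [mul_add, sum_add_distrib, sum_bernoulliWeight_mul_card, sum_mul_card_filter,
    sum_bernoulliWeight_disjoint]

end RandomSubset

section Domination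

variable {V : Type*} [Fintype V] [DecidableEq V] {G : SimpleGraph V} [DecidableRel G.Adj]
  {d k r t : ℕ}

lemma braceKDomNum_le_sum {f : V → ℕ}
    (hf : ∀ v, k ≤ ∑ u ∈ insert v (G.neighborFinset v), f u) :
    braceKDomNum G k ≤ ∑ v, f v :=
  calc braceKDomNum G k ≤ ∑ v, min (f v) k :=
        Nat.sInf_le ⟨_, fun _ ↦ min_le_right _ _, fun v ↦ le_sum_min_of_le_sum (hf v), rfl⟩
    _ ≤ ∑ v, f v := sum_le_sum fun _ _ ↦ min_le_left _ _

lemma braceKDomNum_le_sum_add_sum_deficit {M : V → Finset V}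
    (hM : ∀ v, M v ⊆ insert v (G.neighborFinset v)) (f : V → ℕ) :
    braceKDomNum G k ≤ ∑ v, f v + ∑ v, (k - ∑ u ∈ M v, f u) := by
  rw [← sum_add_distrib]
  refine braceKDomNum_le_sum fun v ↦ ?_
  calc k ≤ ∑ u ∈ M v, f u + (k - ∑ u ∈ M v, f u) := le_add_tsub
    _ ≤ ∑ u ∈ insert v (G.neighborFinset v), f u +
          ∑ u ∈ insert v (G.neighborFinset v), (k - ∑ w ∈ M u, f w) :=
        add_le_add (sum_le_sum_of_subset (hM v))
          (single_le_sum_of_canonicallyOrdered (f := fun u ↦ k - ∑ w ∈ M u, f w)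
            (mem_insert_self _ _))
    _ = _ := sum_add_distrib.symm

lemma braceKDomNum_le_card_add_sum_card_disjoint {ι : Type*} [Fintype ι] [DecidableEq ι]
    {M : V → Finset V} (hM : ∀ v, M v ⊆ insert v (G.neighborFinset v)) (ht : t ≠ 0)
    (hcard : ∀ v, k + t ≤ #(M v) * Fintype.card ι + 1) (S : Finset (V × ι)) :
    braceKDomNum G k ≤
      #S + ∑ v, #{T ∈ (M v ×ˢ univ).powersetCard t | Disjoint T S} := by
  have hcopies (M : Finset V) : ∑ u ∈ M, #{x ∈ S | x.1 = u} = #((M ×ˢ univ) ∩ S) := by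
    rw [sum_card_fiberwise_eq_card_filter]
    congr 1
    ext x
    simp [and_comm]
  calc braceKDomNum G k
      ≤ ∑ u, #{x ∈ S | x.1 = u} + ∑ v, (k - ∑ u ∈ M v, #{x ∈ S | x.1 = u}) :=
        braceKDomNum_le_sum_add_sum_deficit hM _
    _ = #S + ∑ v, (k - #((M v ×ˢ univ) ∩ S)) := by simp [hcopies]
    _ ≤ #S + ∑ v, #{T ∈ (M v ×ˢ univ).powersetCard t | Disjoint T S} := by
        gcongr with v
        exact sub_card_inter_le_card_filter_disjoint ht (by simpa using hcard v) S

lemma exists_subset_closedNeighborhood_card_eq (hd : ∀ v, d ≤ G.degree v) (v : V) :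
    ∃ M ⊆ insert v (G.neighborFinset v), #M = d + 1 :=
  exists_subset_card_eq (by simpa using hd v)

lemma braceKDomNum_le_of_prob (hd : ∀ v, d ≤ G.degree v) (ht : t ≠ 0)
    (hkt : k + t ≤ (d + 1) * r + 1) {p : ℝ} (hp₀ : 0 ≤ p) (hp₁ : p ≤ 1) :
    (braceKDomNum G k : ℝ) ≤
      Fintype.card V * (r * p + ((d + 1) * r).choose t * (1 - p) ^ t) := by
  choose M hM hMcard using exists_subset_closedNeighborhood_card_eq hd
  let J : Finset (Σ _ : V, Finset (V × Fin r)) :=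
    univ.sigma fun v ↦ (M v ×ˢ univ).powersetCard t
  have hJt : ∀ j ∈ J, #j.2 = t := fun j hj ↦ (mem_powersetCard.mp (mem_sigma.mp hj).2).2
  have hJcard : #J = Fintype.card V * ((d + 1) * r).choose t := by simp [J, hMcard]
  obtain ⟨S, hS⟩ := exists_card_add_card_disjoint_le hp₀ hp₁ J Sigma.snd
  have hmissed : #{j ∈ J | Disjoint j.2 S} =
      ∑ v, #{T ∈ (M v ×ˢ univ).powersetCard t | Disjoint T S} := by
    simp only [J, card_filter, sum_sigma]
  have hdom : braceKDomNum G k ≤ #S + #{j ∈ J | Disjoint j.2 S} :=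
    hmissed ▸ braceKDomNum_le_card_add_sum_card_disjoint hM ht
      (fun v ↦ by simpa [hMcard] using hkt) S
  calc (braceKDomNum G k : ℝ) ≤ #S + #{j ∈ J | Disjoint j.2 S} := by exact_mod_cast hdom
    _ ≤ Fintype.card (V × Fin r) * p + ∑ j ∈ J, (1 - p) ^ #j.2 := hS
    _ = Fintype.card (V × Fin r) * p + #J * (1 - p) ^ t := by
        rw [sum_congr rfl fun j hj ↦ by rw [hJt j hj], sum_const, nsmul_eq_mul]
    _ = Fintype.card V * (r * p + ((d + 1) * r).choose t * (1 - p) ^ t) := by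
        rw [hJcard, Fintype.card_prod, Fintype.card_fin]
        push_cast
        ring

lemma braceKDomNum_le_card_mul (hd : ∀ v, d ≤ G.degree v) (hk : k ≤ (d + 1) * r) :
    braceKDomNum G k ≤ Fintype.card V * r := by
  calc braceKDomNum G k ≤ ∑ _v : V, r := braceKDomNum_le_sum fun v ↦ ?_
    _ = Fintype.card V * r := by simp
  calc k ≤ (d + 1) * r := hk
    _ ≤ (G.degree v + 1) * r := by gcongr; exact hd v
    _ = ∑ _u ∈ insert v (G.neighborFinset v), r := by simp

lemma braceKDomNum_le_exp (hd : ∀ v, d ≤ G.degree v) (ht : t ≠ 0)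
    (hkt : k + t ≤ (d + 1) * r + 1) {p : ℝ} (hp : 0 ≤ p) :
    (braceKDomNum G k : ℝ) ≤
      Fintype.card V * (r * p + ((d + 1) * r).choose t * exp (-(t * p))) := by
  rcases le_or_gt p 1 with hp₁ | hp₁
  · refine (braceKDomNum_le_of_prob hd ht hkt hp hp₁).trans ?_
    have hpow : (1 - p) ^ t ≤ exp (-(t * p)) := by
      rw [← mul_neg, exp_nat_mul]
      exact pow_le_pow_left₀ (sub_nonneg.mpr hp₁) (one_sub_le_exp_neg p) t
    gcongr
  · calc (braceKDomNum G k : ℝ) ≤ Fintype.card V * r := by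
          exact_mod_cast braceKDomNum_le_card_mul hd (by omega)
      _ ≤ Fintype.card V * (r * p + ((d + 1) * r).choose t * exp (-(t * p))) := by
          gcongr
          exact le_add_of_le_of_nonneg (le_mul_of_one_le_right (by positivity) hp₁.le)
            (by positivity)

lemma braceKDomNum_le_log (hd : ∀ v, d ≤ G.degree v) (ht : t ≠ 0) (htN : t ≤ (d + 1) * r)
    (hkt : k + t ≤ (d + 1) * r + 1) :
    (braceKDomNum G k : ℝ) ≤
      (log (t * ((d + 1) * r).choose t / r) + 1) / t * (r * Fintype.card V) := by
  have hr : r ≠ 0 := by rintro rfl; omega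
  have hrC : r ≤ t * ((d + 1) * r).choose t :=
    (Nat.le_mul_of_pos_left r d.succ_pos).trans (le_mul_choose ht htN)
  have hC : 0 < ((d + 1) * r).choose t := Nat.choose_pos htN
  have hbound {p : ℝ} (hp : 0 ≤ p) := braceKDomNum_le_exp hd ht hkt hp
  set C := ((d + 1) * r).choose t
  have hratio : (1 : ℝ) ≤ t * C / r := by
    rw [one_le_div (by positivity)]
    exact_mod_cast hrC
  have hexp : exp (-(t * (log (t * C / r) / t))) = r / (t * C) := by
    rw [mul_div_cancel₀ _ (by positivity), exp_neg, exp_log (by positivity), inv_div]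
  refine (hbound (div_nonneg (log_nonneg hratio) t.cast_nonneg)).trans_eq ?_
  rw [hexp]
  field_simp

end Domination

theorem braceK_domination_log_bound_general
    {V : Type*} [Fintype V] [DecidableEq V] (G : SimpleGraph V) [DecidableRel G.Adj]
    {d k r : ℕ} (hd : ∀ v, d ≤ G.degree v) (hk : 1 ≤ k) (hr : k ≤ (d + 1) * r)
    {θ : ℝ} (hθ : θ = ((d : ℝ) + 1) * r - k)
    {B : ℝ} (hB : B = (((d + 1) * r).choose (k - 1) : ℕ)) :
    (braceKDomNum G k : ℝ) ≤
      ((log (θ + 1) + log B - log r + 1) / (θ + 1)) * ((r : ℝ) * Fintype.card V) := by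
  obtain ⟨t, hkt⟩ : ∃ t, (d + 1) * r = k - 1 + t := Nat.exists_eq_add_of_le (by omega)
  have ht : t ≠ 0 := by omega
  have hr₀ : r ≠ 0 := by rintro rfl; omega
  have hθt : θ + 1 = t := by
    have : ((d : ℝ) + 1) * r + 1 = k + t := by norm_cast; omega
    linarith
  have hBt : B = ((d + 1) * r).choose t := by rw [hB, hkt, Nat.choose_symm_add]
  have hB₀ : B ≠ 0 := by
    rw [hBt]
    exact_mod_cast (Nat.choose_pos (show t ≤ (d + 1) * r by omega)).ne'
  have hlog : log (θ + 1) + log B - log r = log (t * ((d + 1) * r).choose t / r) := by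
    rw [hθt, ← hBt, log_div (by positivity) (by positivity), log_mul (by positivity) hB₀]
  rw [hlog, hθt]
  exact braceKDomNum_le_log hd ht (by omega) (by omega)

theorem braceK_domination_log_bound
    {V : Type*} [Fintype V] [DecidableEq V]
    (G : SimpleGraph V) [DecidableRel G.Adj]
    (n : ℕ) (hn : n = Fintype.card V)
    (δ : ℕ) (hδ : δ = G.minDegree)
    (hδ0 : 0 < δ)
    (k : ℕ) (hk : 1 ≤ k)
    (r : ℕ) (hr : r = k / (δ + 1) + 1)
    (θ : ℝ) (hθ : θ = ((δ : ℝ) + 1) * r - k)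
    (B : ℝ) (hB : B = (((δ + 1) * r).choose (k - 1) : ℕ)) :
    (braceKDomNum G k : ℝ) ≤
      ((Real.log (θ + 1) + Real.log B - Real.log r + 1) / (θ + 1)) * ((r : ℝ) * n) := by
  have hkr : k ≤ (δ + 1) * r := hr ▸ (Nat.lt_mul_div_succ k δ.succ_pos).le
  exact hn ▸ braceK_domination_log_bound_general G (fun v ↦ hδ ▸ G.minDegree_le_degree v)
    hk hkr hθ hB
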